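/- Assume 0 < γ ≤ 1 (and γ < p), let u be a local minimizer of J on Ω, and let z ∈ Ω be a branching two-phase free boundary point: z ∈ ∂{x ∈ Ω : u(x) > 0} ∩ ∂{x ∈ Ω : u(x) < 0} and ∇u(z) = 0. Assume: (growth) there exist ρ₀ > 0 and C₂ > 0 with B_{ρ₀}(z) ⊆ Ω and sup_{B_r(z)} |u| ≤ C₂ r^{1+τ} for all 0 < r < ρ₀; and (interior Lipschitz estimate) there exists L > 0 such that for every 0 < r < ρ₀/2 and every y ∈ B_r(z), one has ‖∇u(x)‖ ≤ L r^τ for all x ∈ B_{r/2}(y). Then there exist c₂ ∈ (0, 1/2] and ρ₂ ∈ (0, ρ₀) such that for every 0 < r < ρ₂: c₂ · 𝓛^N(B_r(z)) ≤ 𝓛^N({u > 0} ∩ B_r(z)) ≤ (1 − c₂) · 𝓛^N(B_r(z)) and c₂ · 𝓛^N(B_r(z)) ≤ 𝓛^N({u < 0} ∩ B_r(z)) ≤ (1 − c₂) · 𝓛^N(B_r(z)). -/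

import Mathlib

open MeasureTheory Metric Set
open scoped InnerProductSpace

/-- The Alt–Phillips potential `F_γ(t) = λ₊ (t₊)^γ + λ₋ (t₋)^γ`. -/
noncomputable def Fgam (γ lp lm : ℝ) (t : ℝ) : ℝ :=
  lp * (max t 0) ^ γ + lm * (max (-t) 0) ^ γ

/-- `u` is a `C¹(Ω)` function with `∫_Ω ‖∇u‖^p < ∞` which is a local minimizer of the
functional with density `‖∇v‖^p/p + F(v)`, with respect to Lipschitz competitors on
balls compactly contained in `Ω` agreeing with `u` on the boundary sphere. -/
def APLocMin (N : ℕ) (p : ℝ) (F : ℝ → ℝ) (Ω : Set (EuclideanSpace ℝ (Fin N)))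
    (u : EuclideanSpace ℝ (Fin N) → ℝ) : Prop :=
  (∀ x ∈ Ω, DifferentiableAt ℝ u x) ∧
  ContinuousOn (fun x => gradient u x) Ω ∧
  IntegrableOn (fun x => ‖gradient u x‖ ^ p) Ω volume ∧
  ∀ (z : EuclideanSpace ℝ (Fin N)) (r : ℝ), 0 < r → closure (Metric.ball z r) ⊆ Ω →
    ∀ (v : EuclideanSpace ℝ (Fin N) → ℝ) (K : NNReal),
      LipschitzOnWith K v (closure (Metric.ball z r)) →
      Set.EqOn v u (Metric.sphere z r) →
      (∫ x in Metric.ball z r, (‖gradient u x‖ ^ p / p + F (u x))) ≤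
        ∫ x in Metric.ball z r, (‖gradient v x‖ ^ p / p + F (v x))

open scoped NNReal

/-!
Let `q` be the conjugate exponent of `p` and `ψ x = κ ‖x - y‖ ^ q`. The choice of `q` makes the
flux `‖∇ψ‖ ^ (p - 2) ∇ψ = (κ q) ^ (p - 1) (x - y)` linear, so that the `p`-Laplacian of `ψ` is the
constant `N (κ q) ^ (p - 1)`. If a minimizer `u` lies below `ψ` on `∂B_r(y)`, then comparing it with
`min u ψ` shows that `u y > 0` is impossible as soon as this constant is smaller than the slope of
`F_γ` on `(0, sup u]`; for `γ ≤ 1` that slope is at least `λ₊ γ (sup u) ^ (γ - 1)`. Scaling `κ` with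
`r` yields the nondegeneracy `sup_{B_r(y)} u > c r ^ (1 + τ)` whenever `u y > 0`. The gradient bound
`L r ^ τ` then keeps `u` positive on a ball of radius comparable to `r` inside `B_r(z)`, which is
the lower density bound for `{u > 0}`. Replacing `u` by `-u` gives the one for `{u < 0}`, and the
upper bounds follow because the two phases are disjoint.
-/

section Lipschitz

variable {E F : Type*} [NormedAddCommGroup E] [NormedSpace ℝ E] [SeminormedAddCommGroup F]

theorem exists_mem_segment_inter_frontier {s : Set E} (hs : IsClosed s) {a b : E} (ha : a ∈ s)
    (hb : b ∉ s) : ∃ c ∈ segment ℝ a b, c ∈ frontier s := by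
  have hcover : segment ℝ a b ⊆ s ∪ closure sᶜ := fun x _ =>
    (em (x ∈ s)).imp_right fun hx => subset_closure hx
  obtain ⟨c, hc, hcs, hcs'⟩ := isPreconnected_closed_iff.1 (convex_segment a b).isPreconnected
    s (closure sᶜ) hs isClosed_closure hcover ⟨a, left_mem_segment ℝ a b, ha⟩
    ⟨b, right_mem_segment ℝ a b, subset_closure hb⟩
  exact ⟨c, hc, by rw [frontier_eq_closure_inter_closure]; exact ⟨subset_closure hcs, hcs'⟩⟩

theorem lipschitzWith_indicator_of_eqOn_zero_frontier {s : Set E} (hs : IsClosed s) {f : E → F}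
    {K : ℝ≥0} (hf : LipschitzOnWith K f s) (hf0 : EqOn f 0 (frontier s)) :
    LipschitzWith K (s.indicator f) := by
  have norm_le_of_notMem : ∀ a ∈ s, ∀ b ∉ s, ‖f a‖ ≤ K * dist a b := by
    intro a ha b hb
    obtain ⟨c, hc, hcs⟩ := exists_mem_segment_inter_frontier hs ha hb
    calc ‖f a‖ = dist (f a) (f c) := by rw [hf0 hcs, Pi.zero_apply, dist_zero_right]
      _ ≤ K * dist a c := hf.dist_le_mul a ha c (hs.frontier_subset hcs)
      _ ≤ K * dist a b := by
        gcongr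
        linarith [dist_add_dist_of_mem_segment hc, dist_nonneg (x := c) (y := b)]
  refine LipschitzWith.of_dist_le_mul fun a b => ?_
  by_cases ha : a ∈ s <;> by_cases hb : b ∈ s
  · simpa [ha, hb] using hf.dist_le_mul a ha b hb
  · simpa [ha, hb] using norm_le_of_notMem a ha b hb
  · simpa [ha, hb, dist_comm] using norm_le_of_notMem b hb a ha
  · simp only [indicator_of_notMem ha, indicator_of_notMem hb, dist_self]
    positivity

theorem fderiv_eq_zero_of_nonneg_of_eq_zero {f : E → ℝ} (hf : ∀ x, 0 ≤ f x) {x : E}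
    (hx : f x = 0) : fderiv ℝ f x = 0 :=
  IsLocalMin.fderiv_eq_zero <| .of_forall fun t => hx.trans_le (hf t)

end Lipschitz

section IntegrationByParts

variable {E : Type*} [NormedAddCommGroup E] [NormedSpace ℝ E] [FiniteDimensional ℝ E]
  [MeasurableSpace E] [BorelSpace E] (μ : Measure E) [μ.IsAddHaarMeasure]
  {w : E → ℝ} {K : ℝ≥0}

theorem integrable_mul_lineDeriv {g : E → ℝ} (hg : Continuous g) (hw : LipschitzWith K w)
    (hc : HasCompactSupport w) (v : E) : Integrable (fun x => g x * lineDeriv ℝ w x v) μ := by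
  refine (integrableOn_iff_integrable_of_support_subset (s := tsupport w) ?_).1 <|
    ((hw.locallyIntegrable_lineDeriv v).integrableOn_isCompact hc).continuousOn_mul
      hg.continuousOn hc
  intro x hx
  contrapose! hx
  have hw0 : w =ᶠ[nhds x] fun _ => 0 := notMem_tsupport_iff_eventuallyEq.mp hx
  have hderiv : lineDeriv ℝ w x v = 0 := by
    rw [hw0.lineDeriv_eq]
    simp [lineDeriv]
  simp [hderiv]

theorem integral_apply_sub_mul_lineDeriv (hw : LipschitzWith K w) (hc : HasCompactSupport w)
    (ℓ : E →L[ℝ] ℝ) (y v : E) :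
    ∫ x, ℓ (x - y) * lineDeriv ℝ w x v ∂μ = -(ℓ v * ∫ x, w x ∂μ) := by
  have hℓ : LipschitzWith ‖ℓ‖₊ fun x => ℓ (x - y) := by
    simpa using ℓ.lipschitz.sub (LipschitzWith.const (ℓ y))
  have hℓv : ∀ x, lineDeriv ℝ (fun x => ℓ (x - y)) x v = ℓ v := fun x => by
    have h : HasFDerivAt (fun x => ℓ (x - y)) ℓ x :=
      ℓ.hasFDerivAt.comp x ((hasFDerivAt_id x).sub_const y)
    exact (h.hasLineDerivAt v).lineDeriv
  have hparts := hℓ.integral_lineDeriv_mul_eq (μ := μ) hw hc v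
  simp only [hℓv, lineDeriv_neg, neg_mul, integral_neg, integral_const_mul] at hparts
  rw [hparts, neg_neg]
  simp only [mul_comm]

theorem fderiv_apply_sub_ae_eq_sum {ι : Type*} [Fintype ι] (b : Module.Basis ι ℝ E)
    (hw : LipschitzWith K w) (y : E) :
    (fun x => fderiv ℝ w x (x - y)) =ᵐ[μ]
      fun x => ∑ i, (b.coord i).toContinuousLinearMap (x - y) * lineDeriv ℝ w x (b i) := by
  filter_upwards [hw.ae_differentiableAt (μ := μ)] with x hx
  calc fderiv ℝ w x (x - y) = fderiv ℝ w x (∑ i, b.repr (x - y) i • b i) := by rw [b.sum_repr]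
    _ = _ := by simp [map_sum, hx.lineDeriv_eq_fderiv]

theorem integrable_fderiv_apply_sub (hw : LipschitzWith K w) (hc : HasCompactSupport w) (y : E) :
    Integrable (fun x => fderiv ℝ w x (x - y)) μ := by
  refine (integrable_finsetSum _ fun i _ => ?_).congr
    (fderiv_apply_sub_ae_eq_sum μ (Module.finBasis ℝ E) hw y).symm
  exact integrable_mul_lineDeriv μ (by fun_prop) hw hc _

theorem integral_fderiv_apply_sub (hw : LipschitzWith K w) (hc : HasCompactSupport w) (y : E) :
    ∫ x, fderiv ℝ w x (x - y) ∂μ = -(Module.finrank ℝ E * ∫ x, w x ∂μ) := by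
  rw [integral_congr_ae (fderiv_apply_sub_ae_eq_sum μ (Module.finBasis ℝ E) hw y),
    integral_finsetSum _ fun i _ => integrable_mul_lineDeriv μ (by fun_prop) hw hc _]
  simp only [integral_apply_sub_mul_lineDeriv μ hw hc]
  simp

theorem setIntegral_fderiv_apply_sub (hw : LipschitzWith K w) (hc : HasCompactSupport w)
    (hw_nonneg : ∀ x, 0 ≤ w x) {s : Set E} (hs : ∀ x ∉ s, w x = 0) (y : E) :
    ∫ x in s, fderiv ℝ w x (x - y) ∂μ = -(Module.finrank ℝ E * ∫ x in s, w x ∂μ) := by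
  have hDw : ∀ x ∉ s, fderiv ℝ w x (x - y) = 0 := fun x hx => by
    rw [fderiv_eq_zero_of_nonneg_of_eq_zero hw_nonneg (hs x hx), zero_apply]
  rw [setIntegral_eq_integral_of_forall_compl_eq_zero hDw,
    setIntegral_eq_integral_of_forall_compl_eq_zero hs, integral_fderiv_apply_sub μ hw hc]

end IntegrationByParts

section PowerBarrier

variable {E : Type*} [NormedAddCommGroup E]

/-- The radial barrier `κ ‖x - y‖ ^ q` centred at `y`, used with the conjugate exponent `q` of `p`,
for which its `p`-Laplacian is constant. -/
noncomputable def powerBarrier (κ q : ℝ) (y x : E) : ℝ :=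
  κ * ‖x - y‖ ^ q

variable {p q κ : ℝ}

theorem powerBarrier_nonneg (hκ : 0 ≤ κ) (y x : E) : 0 ≤ powerBarrier κ q y x := by
  unfold powerBarrier
  positivity

theorem powerBarrier_self (hq : q ≠ 0) (y : E) : powerBarrier κ q y y = 0 := by
  simp [powerBarrier, hq]

variable [InnerProductSpace ℝ E]

theorem contDiff_powerBarrier (hq : 1 < q) (y : E) : ContDiff ℝ 1 (powerBarrier κ q y) :=
  contDiff_const.mul ((contDiff_id.sub contDiff_const).norm_rpow hq)

theorem hasFDerivAt_powerBarrier (hq : 1 < q) (y x : E) :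
    HasFDerivAt (powerBarrier κ q y) (κ • ((q * ‖x - y‖ ^ (q - 2)) • innerSL ℝ (x - y))) x :=
  ((hasFDerivAt_norm_rpow (x - y) hq).comp x ((hasFDerivAt_id x).sub_const y)).const_mul κ

theorem norm_fderiv_powerBarrier (hκ : 0 ≤ κ) (hq : 1 < q) (y x : E) :
    ‖fderiv ℝ (powerBarrier κ q y) x‖ = κ * q * ‖x - y‖ ^ (q - 1) := by
  have hpow : ‖x - y‖ ^ (q - 1) = ‖x - y‖ ^ (q - 2) * ‖x - y‖ := by
    rw [← Real.rpow_add_one' (norm_nonneg _) (by linarith)]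
    ring_nf
  rw [(hasFDerivAt_powerBarrier hq y x).fderiv, norm_smul, norm_smul, innerSL_apply_norm, hpow,
    Real.norm_of_nonneg hκ, Real.norm_of_nonneg (by positivity)]
  ring

theorem fderiv_powerBarrier_apply_sub (hκ : 0 ≤ κ) (hq : 1 < q) (y x : E) :
    fderiv ℝ (powerBarrier κ q y) x (x - y) =
      ‖fderiv ℝ (powerBarrier κ q y) x‖ * ‖x - y‖ := by
  rw [(hasFDerivAt_powerBarrier hq y x).fderiv, norm_smul, norm_smul, innerSL_apply_norm,
    Real.norm_of_nonneg hκ, Real.norm_of_nonneg (by positivity)]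
  simp only [smul_apply, innerSL_apply_apply, real_inner_self_eq_norm_sq, smul_eq_mul]
  ring

theorem norm_fderiv_powerBarrier_rpow_sub_one (hpq : p.HolderConjugate q) (hκ : 0 ≤ κ) (y x : E) :
    ‖fderiv ℝ (powerBarrier κ q y) x‖ ^ (p - 1) = (κ * q) ^ (p - 1) * ‖x - y‖ := by
  have hexp : (q - 1) * (p - 1) = 1 := by linarith [hpq.mul_eq_add]
  have hq := hpq.symm.pos
  rw [norm_fderiv_powerBarrier hκ hpq.symm.lt, Real.mul_rpow (by positivity) (by positivity),
    ← Real.rpow_mul (norm_nonneg _), hexp, Real.rpow_one]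

/-- Convexity of `‖·‖ ^ p / p` at `∇ψ`, in the form of Young's inequality; by the choice of `q` its
subgradient there is `(κ q) ^ (p - 1) (x - y)`. -/
theorem norm_fderiv_powerBarrier_rpow_div_add_le (hpq : p.HolderConjugate q) (hκ : 0 ≤ κ) (y x : E)
    (φ : E →L[ℝ] ℝ) :
    ‖fderiv ℝ (powerBarrier κ q y) x‖ ^ p / p +
        (κ * q) ^ (p - 1) * (φ - fderiv ℝ (powerBarrier κ q y) x) (x - y) ≤ ‖φ‖ ^ p / p := by
  have hflux := norm_fderiv_powerBarrier_rpow_sub_one hpq hκ y x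
  have happly := fderiv_powerBarrier_apply_sub hκ hpq.symm.lt y x
  set g := ‖fderiv ℝ (powerBarrier κ q y) x‖
  have hg0 : 0 ≤ g := norm_nonneg _
  have hq := hpq.symm.pos
  have hself : (κ * q) ^ (p - 1) * fderiv ℝ (powerBarrier κ q y) x (x - y) = g ^ p := by
    rw [happly, mul_left_comm, ← hflux, mul_comm, ← Real.rpow_add_one' hg0 (by linarith [hpq.pos]),
      sub_add_cancel]
  have hyoung : ‖φ‖ * g ^ (p - 1) ≤ ‖φ‖ ^ p / p + g ^ p / q := by
    have := Real.young_inequality_of_nonneg (norm_nonneg φ) (Real.rpow_nonneg hg0 (p - 1)) hpq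
    rwa [← Real.rpow_mul hg0, hpq.sub_one_mul_conj] at this
  have hφ : (κ * q) ^ (p - 1) * φ (x - y) ≤ ‖φ‖ * g ^ (p - 1) := by
    rw [hflux, mul_left_comm]
    gcongr
    exact (le_abs_self _).trans (φ.le_opNorm _)
  have hsum : g ^ p / p + g ^ p / q = g ^ p := by
    rw [div_eq_mul_inv, div_eq_mul_inv, ← mul_add, hpq.inv_add_inv_eq_one, mul_one]
  rw [sub_apply, mul_sub, hself]
  linarith

end PowerBarrier

section Excess

variable {E : Type*}

/-- The excess `(u - ψ)₊` of `u` over the barrier `ψ` on `s`, extended by zero outside `s`, so that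
`u - excess s u ψ` is the competitor equal to `min u ψ` on `s` and to `u` elsewhere. -/
noncomputable def excess (s : Set E) (u ψ : E → ℝ) : E → ℝ :=
  s.indicator fun x => max (u x - ψ x) 0

variable {s : Set E} {u ψ : E → ℝ} {x : E}

theorem excess_nonneg (s : Set E) (u ψ : E → ℝ) (x : E) : 0 ≤ excess s u ψ x :=
  indicator_nonneg (fun _ _ => le_max_right _ _) x

theorem excess_eq_sub (hx : x ∈ s) (h : ψ x ≤ u x) : excess s u ψ x = u x - ψ x := by
  rw [excess, indicator_of_mem hx, max_eq_left (sub_nonneg.2 h)]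

theorem excess_eq_zero (h : x ∈ s → u x ≤ ψ x) : excess s u ψ x = 0 :=
  indicator_apply_eq_zero.2 fun hx => max_eq_right (sub_nonpos.2 (h hx))

theorem excess_eq_zero_of_notMem_ball [PseudoMetricSpace E] {y : E} {r : ℝ}
    (hle : ∀ x ∈ sphere y r, u x ≤ ψ x) (hx : x ∉ ball y r) :
    excess (closedBall y r) u ψ x = 0 :=
  excess_eq_zero fun hxs => hle x <| le_antisymm hxs (not_lt.1 hx)

variable [NormedAddCommGroup E] [NormedSpace ℝ E]

theorem lipschitzWith_excess (hs : IsClosed s) {Ku Kψ : ℝ≥0} (hu : LipschitzOnWith Ku u s)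
    (hψ : LipschitzOnWith Kψ ψ s) (hle : ∀ x ∈ frontier s, u x ≤ ψ x) :
    LipschitzWith (Ku + Kψ) (excess s u ψ) := by
  refine lipschitzWith_indicator_of_eqOn_zero_frontier hs ?_
    fun x hx => max_eq_right (sub_nonpos.2 (hle x hx))
  simpa [Function.comp_def] using (LipschitzWith.id.max_const 0).comp_lipschitzOnWith (hu.sub hψ)

theorem fderiv_excess (hx : x ∈ interior s) (hu : DifferentiableAt ℝ u x)
    (hψ : DifferentiableAt ℝ ψ x) (hlt : ψ x < u x) :
    fderiv ℝ (excess s u ψ) x = fderiv ℝ u x - fderiv ℝ ψ x := by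
  have heq : excess s u ψ =ᶠ[nhds x] fun t => u t - ψ t := by
    filter_upwards [mem_interior_iff_mem_nhds.1 hx,
      hψ.continuousAt.eventually_lt hu.continuousAt hlt] with t hts ht
    exact excess_eq_sub hts ht.le
  rw [heq.fderiv_eq, fderiv_fun_sub hu hψ]

end Excess

section Energy

variable {E : Type*} [NormedAddCommGroup E] [InnerProductSpace ℝ E] [CompleteSpace E]

theorem norm_gradient_eq_norm_fderiv (f : E → ℝ) (x : E) : ‖gradient f x‖ = ‖fderiv ℝ f x‖ := by
  rw [← toDual_gradient, LinearIsometryEquiv.norm_map]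

theorem sub_le_of_norm_gradient_le {f : E → ℝ} {a x : E} {r C : ℝ}
    (hf : ∀ t ∈ ball a r, DifferentiableAt ℝ f t) (hC : ∀ t ∈ ball a r, ‖gradient f t‖ ≤ C)
    (hx : x ∈ ball a r) : f a - f x ≤ C * r := by
  have hC0 : 0 ≤ C := (norm_nonneg _).trans (hC x hx)
  calc f a - f x ≤ ‖f a - f x‖ := le_abs_self _
    _ ≤ C * ‖a - x‖ := (convex_ball a r).norm_image_sub_le_of_norm_fderiv_le hf
        (fun t ht => norm_gradient_eq_norm_fderiv f t ▸ hC t ht) hx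
        (mem_ball_self (pos_of_mem_ball hx))
    _ ≤ C * r := by
        gcongr
        exact (mem_ball_iff_norm'.1 hx).le

theorem gradient_fun_neg (f : E → ℝ) (x : E) : gradient (fun t => -f t) x = -gradient f x := by
  simp [gradient, fderiv_fun_neg]

/-- The density `‖∇u‖ ^ p / p + F(u)` of the functional minimized in `APLocMin`. -/
noncomputable def energyDensity (p : ℝ) (F : ℝ → ℝ) (u : E → ℝ) (x : E) : ℝ :=
  ‖gradient u x‖ ^ p / p + F (u x)

variable {p q κ θ : ℝ} {F : ℝ → ℝ} {s : Set E} {u : E → ℝ} {x y : E}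

theorem energyDensity_nonneg (hp : 0 ≤ p) (hF : ∀ t, 0 ≤ F t) (u : E → ℝ) (x : E) :
    0 ≤ energyDensity p F u x :=
  add_nonneg (by positivity) (hF _)

theorem energyDensity_sub_excess_le (hpq : p.HolderConjugate q) (hκ : 0 ≤ κ)
    (hx : x ∈ interior s) (hu : DifferentiableAt ℝ u x)
    (hw : DifferentiableAt ℝ (excess s u (powerBarrier κ q y)) x)
    (hF : powerBarrier κ q y x ≤ u x →
      θ * (u x - powerBarrier κ q y x) ≤ F (u x) - F (powerBarrier κ q y x)) :
    energyDensity p F (fun t => u t - excess s u (powerBarrier κ q y) t) x ≤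
      energyDensity p F u x -
        ((κ * q) ^ (p - 1) * fderiv ℝ (excess s u (powerBarrier κ q y)) x (x - y) +
          θ * excess s u (powerBarrier κ q y) x) := by
  set ψ := powerBarrier κ q y
  simp only [energyDensity, norm_gradient_eq_norm_fderiv, fderiv_fun_sub hu hw]
  rcases le_or_gt (u x) (ψ x) with hle | hlt
  · have hw0 : excess s u ψ x = 0 := excess_eq_zero fun _ => hle
    simp [hw0, fderiv_eq_zero_of_nonneg_of_eq_zero (excess_nonneg s u ψ) hw0]
  · have hψ : DifferentiableAt ℝ ψ x := (hasFDerivAt_powerBarrier hpq.symm.lt y x).differentiableAt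
    rw [fderiv_excess hx hu hψ hlt, excess_eq_sub (interior_subset hx) hlt.le, sub_sub_cancel,
      sub_sub_cancel]
    linarith [norm_fderiv_powerBarrier_rpow_div_add_le hpq hκ y x (fderiv ℝ u x), hF hlt.le]

end Energy

section Potential

variable {γ lp lm : ℝ}

theorem Fgam_neg (γ lp lm t : ℝ) : Fgam γ lp lm (-t) = Fgam γ lm lp t := by
  simp only [Fgam, neg_neg, add_comm]

theorem Fgam_nonneg (hlp : 0 ≤ lp) (hlm : 0 ≤ lm) (t : ℝ) : 0 ≤ Fgam γ lp lm t := by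
  unfold Fgam
  positivity

theorem Fgam_of_nonneg (hγ : γ ≠ 0) {t : ℝ} (ht : 0 ≤ t) : Fgam γ lp lm t = lp * t ^ γ := by
  simp [Fgam, ht, hγ]

theorem continuous_Fgam (hγ : 0 ≤ γ) : Continuous (Fgam γ lp lm) := by
  have hpow : Continuous fun t : ℝ => t ^ γ := Real.continuous_rpow_const hγ
  exact ((hpow.comp (continuous_id.max continuous_const)).const_mul lp).add
    ((hpow.comp (continuous_neg.max continuous_const)).const_mul lm)

/-- The barrier's `p`-Laplacian and the slope of the potential scale alike in `r`: this is where the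
exponent `β = 1 + τ` comes from. -/
theorem mul_rpow_sub_mul_rpow_sub_one {p q β c r : ℝ} (hpq : p.HolderConjugate q)
    (hβ : β * (p - γ) = p) (hc : 0 < c) (hr : 0 < r) :
    (c * r ^ (β - q) * q) ^ (p - 1) = c ^ (p - γ) * q ^ (p - 1) * (c * r ^ β) ^ (γ - 1) := by
  have hexp : (β - q) * (p - 1) = β * (γ - 1) := by linarith [hpq.mul_eq_add]
  have hcexp : c ^ (p - 1) = c ^ (p - γ) * c ^ (γ - 1) := by
    rw [← Real.rpow_add hc, sub_add_sub_cancel]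
  rw [Real.mul_rpow (by positivity) hpq.symm.nonneg, Real.mul_rpow hc.le (by positivity),
    Real.mul_rpow hc.le (by positivity), ← Real.rpow_mul hr.le, ← Real.rpow_mul hr.le, hexp,
    hcexp]
  ring

theorem mul_rpow_sub_one_mul_sub_le (hγ0 : 0 ≤ γ) (hγ1 : γ ≤ 1) {s t M : ℝ} (hs : 0 ≤ s)
    (hst : s ≤ t) (htM : t ≤ M) : γ * M ^ (γ - 1) * (t - s) ≤ t ^ γ - s ^ γ := by
  rcases hst.eq_or_lt with rfl | hlt
  · simp
  have ht : 0 < t := hs.trans_lt hlt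
  have hslope : γ * t ^ (γ - 1) ≤ (t ^ γ - s ^ γ) / (t - s) := by
    simpa only [slope_def_field] using (Real.concaveOn_rpow hγ0 hγ1).le_slope_of_hasDerivAt
      hs ht.le hlt (Real.hasDerivAt_rpow_const (Or.inl ht.ne'))
  calc γ * M ^ (γ - 1) * (t - s) ≤ γ * t ^ (γ - 1) * (t - s) := by
        have := Real.rpow_le_rpow_of_nonpos ht htM (sub_nonpos.2 hγ1)
        have := sub_nonneg.2 hst
        gcongr
    _ ≤ t ^ γ - s ^ γ := (le_div_iff₀ (sub_pos.2 hlt)).1 hslope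

theorem mul_sub_le_Fgam_sub (hγ0 : 0 < γ) (hγ1 : γ ≤ 1) (hlp : 0 ≤ lp) {s t M : ℝ} (hs : 0 ≤ s)
    (hst : s ≤ t) (htM : t ≤ M) :
    lp * (γ * M ^ (γ - 1)) * (t - s) ≤ Fgam γ lp lm t - Fgam γ lp lm s := by
  rw [Fgam_of_nonneg hγ0.ne' hs, Fgam_of_nonneg hγ0.ne' (hs.trans hst), ← mul_sub, mul_assoc]
  exact mul_le_mul_of_nonneg_left (mul_rpow_sub_one_mul_sub_le hγ0.le hγ1 hs hst htM) hlp

end Potential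

namespace APLocMin

variable {N : ℕ} {p q : ℝ} {F : ℝ → ℝ} {Ω : Set (EuclideanSpace ℝ (Fin N))}
  {u : EuclideanSpace ℝ (Fin N) → ℝ} {y z : EuclideanSpace ℝ (Fin N)} {r : ℝ}

theorem differentiableAt (hu : APLocMin N p F Ω u) {x : EuclideanSpace ℝ (Fin N)} (hx : x ∈ Ω) :
    DifferentiableAt ℝ u x :=
  hu.1 x hx

theorem continuousOn (hu : APLocMin N p F Ω u) : ContinuousOn u Ω := fun _ hx =>
  (hu.differentiableAt hx).continuousAt.continuousWithinAt

theorem continuousOn_gradient (hu : APLocMin N p F Ω u) : ContinuousOn (gradient u) Ω :=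
  hu.2.1

theorem neg (hu : APLocMin N p F Ω u) : APLocMin N p (fun t => F (-t)) Ω fun x => -u x := by
  obtain ⟨hdiff, hcont, hint, hmin⟩ := hu
  refine ⟨fun x hx => (hdiff x hx).neg, ?_, ?_, fun z r hr hcl v K hv hve => ?_⟩
  · simpa only [gradient_fun_neg] using hcont.fun_neg
  · simpa only [gradient_fun_neg, norm_neg] using hint
  · have h := hmin z r hr hcl (fun x => -v x) K hv.neg fun x hx => by simp [hve hx]
    simpa only [gradient_fun_neg, norm_neg, neg_neg] using h

theorem isOpen_inter_ball (hu : APLocMin N p F Ω u) (hball : ball z r ⊆ Ω) {I : Set ℝ}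
    (hI : IsOpen I) : IsOpen ({x ∈ Ω | u x ∈ I} ∩ ball z r) := by
  have heq : {x ∈ Ω | u x ∈ I} ∩ ball z r = ball z r ∩ u ⁻¹' I := by
    ext x
    exact ⟨fun hx => ⟨hx.2, hx.1.2⟩, fun hx => ⟨⟨hball hx.1, hx.2⟩, hx.1⟩⟩
  rw [heq]
  exact (hu.continuousOn.mono hball).isOpen_inter_preimage isOpen_ball hI

theorem exists_lipschitzOnWith_closedBall (hu : APLocMin N p F Ω u) (hB : closedBall y r ⊆ Ω) :
    ∃ K : ℝ≥0, LipschitzOnWith K u (closedBall y r) := by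
  obtain ⟨C, hC⟩ := (isCompact_closedBall y r).exists_bound_of_continuousOn
    (hu.continuousOn_gradient.mono hB)
  refine ⟨C.toNNReal, (convex_closedBall y r).lipschitzOnWith_of_nnnorm_fderiv_le
    (fun x hx => hu.differentiableAt (hB hx)) fun x hx => ?_⟩
  rw [← NNReal.coe_le_coe, coe_nnnorm, ← norm_gradient_eq_norm_fderiv]
  exact (hC x hx).trans (Real.le_coe_toNNReal C)

theorem integrableOn_energyDensity (hu : APLocMin N p F Ω u) (hp : 0 ≤ p) (hF : Continuous F)
    (hB : closedBall y r ⊆ Ω) : IntegrableOn (energyDensity p F u) (ball y r) := by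
  have hcont : ContinuousOn (energyDensity p F u) (closedBall y r) :=
    (((hu.continuousOn_gradient.mono hB).norm.rpow_const fun _ _ => Or.inr hp).div_const p).add
      (hF.comp_continuousOn (hu.continuousOn.mono hB))
  exact (hcont.integrableOn_compact (isCompact_closedBall y r)).mono_set ball_subset_closedBall

theorem setIntegral_nonpos_of_energyDensity_sub_le (hu : APLocMin N p F Ω u) (hp : 0 ≤ p)
    (hF : Continuous F) (hF0 : ∀ t, 0 ≤ F t) (hr : 0 < r) (hB : closedBall y r ⊆ Ω)
    {w G : EuclideanSpace ℝ (Fin N) → ℝ} {K : ℝ≥0} (hw : LipschitzWith K w)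
    (hw0 : ∀ x ∈ sphere y r, w x = 0) (hG : IntegrableOn G (ball y r))
    (hle : ∀ᵐ x ∂volume.restrict (ball y r),
      energyDensity p F (fun t => u t - w t) x ≤ energyDensity p F u x - G x) :
    ∫ x in ball y r, G x ≤ 0 := by
  obtain ⟨Ku, hKu⟩ := hu.exists_lipschitzOnWith_closedBall hB
  rw [← closure_ball y hr.ne'] at hB hKu
  have hmin : ∫ x in ball y r, energyDensity p F u x ≤
      ∫ x in ball y r, energyDensity p F (fun t => u t - w t) x :=
    hu.2.2.2 y r hr hB _ _ (hKu.sub hw.lipschitzOnWith) fun x hx => by simp [hw0 x hx]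
  rw [closure_ball y hr.ne'] at hB
  have hint := hu.integrableOn_energyDensity hp hF hB
  have hcomp := integral_mono_of_nonneg
    (.of_forall fun x => energyDensity_nonneg hp hF0 (fun t => u t - w t) x) (hint.sub hG) hle
  simp only [Pi.sub_apply, integral_sub hint hG] at hcomp
  linarith

theorem exists_lipschitzWith_excess_powerBarrier (hu : APLocMin N p F Ω u) (hq : 1 < q)
    (hB : closedBall y r ⊆ Ω) {κ : ℝ} (hle : ∀ x ∈ sphere y r, u x ≤ powerBarrier κ q y x) :
    ∃ K : ℝ≥0, LipschitzWith K (excess (closedBall y r) u (powerBarrier κ q y)) := by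
  obtain ⟨Ku, hKu⟩ := hu.exists_lipschitzOnWith_closedBall hB
  obtain ⟨Kψ, hKψ⟩ := (contDiff_powerBarrier (κ := κ) hq y).contDiffOn
    |>.exists_lipschitzOnWith one_ne_zero (convex_closedBall y r) (isCompact_closedBall y r)
  exact ⟨_, lipschitzWith_excess isClosed_closedBall hKu hKψ
    fun x hx => hle x (frontier_closedBall_subset_sphere hx)⟩

theorem mul_setIntegral_excess_le (hu : APLocMin N p F Ω u) (hpq : p.HolderConjugate q)
    (hF : Continuous F) (hF0 : ∀ t, 0 ≤ F t) (hr : 0 < r) (hB : closedBall y r ⊆ Ω)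
    {κ θ : ℝ} (hκ : 0 ≤ κ) (hle : ∀ x ∈ sphere y r, u x ≤ powerBarrier κ q y x)
    (hslope : ∀ x ∈ closedBall y r, powerBarrier κ q y x ≤ u x →
      θ * (u x - powerBarrier κ q y x) ≤ F (u x) - F (powerBarrier κ q y x)) :
    θ * ∫ x in ball y r, excess (closedBall y r) u (powerBarrier κ q y) x ≤
      N * (κ * q) ^ (p - 1) *
        ∫ x in ball y r, excess (closedBall y r) u (powerBarrier κ q y) x := by
  obtain ⟨K, hw⟩ := hu.exists_lipschitzWith_excess_powerBarrier hpq.symm.lt hB hle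
  set w := excess (closedBall y r) u (powerBarrier κ q y)
  have hw0 : ∀ x ∉ ball y r, w x = 0 := fun x hx => excess_eq_zero_of_notMem_ball hle hx
  have hwc : HasCompactSupport w := .intro (isCompact_closedBall y r) fun x hx =>
    hw0 x fun h => hx (ball_subset_closedBall h)
  have hDw_int := (integrable_fderiv_apply_sub volume hw hwc y).const_mul ((κ * q) ^ (p - 1))
  have hw_int := (hw.continuous.integrable_of_hasCompactSupport hwc (μ := volume)).const_mul θ
  have hdensity : ∀ᵐ x ∂volume.restrict (ball y r),
      energyDensity p F (fun t => u t - w t) x ≤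
        energyDensity p F u x - ((κ * q) ^ (p - 1) * fderiv ℝ w x (x - y) + θ * w x) := by
    filter_upwards [ae_restrict_mem measurableSet_ball,
      ae_restrict_of_ae hw.ae_differentiableAt] with x hx hwx
    have hxB := ball_subset_closedBall hx
    exact energyDensity_sub_excess_le hpq hκ (ball_subset_interior_closedBall hx)
      (hu.differentiableAt (hB hxB)) hwx (hslope x hxB)
  have hvar := hu.setIntegral_nonpos_of_energyDensity_sub_le hpq.nonneg hF hF0 hr hB hw
    (fun x hx => hw0 x (sphere_disjoint_ball.notMem_of_mem_left hx))
    (hDw_int.add hw_int).integrableOn hdensity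
  simp only [Pi.add_apply] at hvar
  rw [integral_add hDw_int.integrableOn hw_int.integrableOn, integral_const_mul,
    integral_const_mul, setIntegral_fderiv_apply_sub volume hw hwc (excess_nonneg _ _ _) hw0 y,
    finrank_euclideanSpace_fin] at hvar
  linarith

theorem apply_center_nonpos (hu : APLocMin N p F Ω u) (hpq : p.HolderConjugate q)
    (hF : Continuous F) (hF0 : ∀ t, 0 ≤ F t) (hr : 0 < r) (hB : closedBall y r ⊆ Ω)
    {M κ θ : ℝ} (hκ : 0 ≤ κ) (hM : ∀ x ∈ closedBall y r, u x ≤ M) (hMκ : M ≤ κ * r ^ q)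
    (hslope : ∀ s t, 0 ≤ s → s ≤ t → t ≤ M → θ * (t - s) ≤ F t - F s)
    (hθ : N * (κ * q) ^ (p - 1) < θ) : u y ≤ 0 := by
  have hle : ∀ x ∈ sphere y r, u x ≤ powerBarrier κ q y x := fun x hx => by
    rw [powerBarrier, ← dist_eq_norm, mem_sphere.1 hx]
    exact (hM x (sphere_subset_closedBall hx)).trans hMκ
  have hmul := hu.mul_setIntegral_excess_le hpq hF hF0 hr hB hκ hle fun x hx h =>
    hslope _ _ (powerBarrier_nonneg hκ y x) h (hM x hx)
  obtain ⟨K, hw⟩ := hu.exists_lipschitzWith_excess_powerBarrier hpq.symm.lt hB hle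
  set w := excess (closedBall y r) u (powerBarrier κ q y) with hw_def
  by_contra! hy
  have hwy : w y = u y := by
    have hψy : powerBarrier κ q y y = 0 := powerBarrier_self hpq.symm.ne_zero y
    rw [hw_def, excess_eq_sub (mem_closedBall_self hr.le) (hψy.trans_le hy.le), hψy, sub_zero]
  have hpos : 0 < ∫ x in ball y r, w x := by
    rw [setIntegral_eq_integral_of_forall_compl_eq_zero fun x hx =>
      excess_eq_zero_of_notMem_ball hle hx]
    exact hw.continuous.integral_pos_of_hasCompactSupport_nonneg_nonzero
      (.intro (isCompact_closedBall y r) fun x hx => indicator_of_notMem hx _)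
      (excess_nonneg _ _ _) (hwy.trans_ne hy.ne')
  exact (mul_lt_mul_of_pos_right hθ hpos).not_ge hmul

variable {γ lp lm : ℝ}

theorem exists_mul_rpow_lt_of_pos (hu : APLocMin N p (Fgam γ lp lm) Ω u) (hp : 1 < p) (hγ0 : 0 < γ)
    (hγ1 : γ ≤ 1) (hlp : 0 < lp) (hlm : 0 ≤ lm) :
    ∃ c > 0, ∀ (y : EuclideanSpace ℝ (Fin N)) (r : ℝ), 0 < r → 0 < u y → closedBall y r ⊆ Ω →
      ∃ x ∈ closedBall y r, c * r ^ (1 + γ / (p - γ)) < u x := by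
  have hpγ : 0 < p - γ := by linarith
  have hpq : p.HolderConjugate p.conjExponent := .conjExponent hp
  have hq := hpq.symm.pos
  set q := p.conjExponent
  set β := 1 + γ / (p - γ) with hβ
  have hβp : β * (p - γ) = p := by
    rw [hβ]
    field_simp
    ring
  obtain ⟨c, hc, hcT⟩ : ∃ c > 0, c ^ (p - γ) = lp * γ / ((N + 1) * q ^ (p - 1)) :=
    ⟨(lp * γ / ((N + 1) * q ^ (p - 1))) ^ (p - γ)⁻¹, by positivity,
      Real.rpow_inv_rpow (by positivity) hpγ.ne'⟩
  refine ⟨c, hc, fun y r hr hy hB => ?_⟩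
  by_contra! hM
  refine hy.not_ge <| hu.apply_center_nonpos hpq (continuous_Fgam hγ0.le)
    (Fgam_nonneg hlp.le hlm) hr hB (κ := c * r ^ (β - q)) (by positivity) hM ?_
    (fun s t => mul_sub_le_Fgam_sub hγ0 hγ1 hlp.le) ?_
  · rw [mul_assoc, ← Real.rpow_add hr, sub_add_cancel]
  calc N * (c * r ^ (β - q) * q) ^ (p - 1)
      = N / (N + 1) * (lp * (γ * (c * r ^ β) ^ (γ - 1))) := by
        rw [mul_rpow_sub_mul_rpow_sub_one hpq hβp hc hr, hcT]
        field_simp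
    _ < lp * (γ * (c * r ^ β) ^ (γ - 1)) :=
        mul_lt_of_lt_one_left (by positivity) ((div_lt_one (by positivity)).2 (lt_add_one _))

theorem exists_mul_volume_ball_le_volume_pos (hu : APLocMin N p (Fgam γ lp lm) Ω u) (hp : 1 < p)
    (hγ0 : 0 < γ) (hγ1 : γ ≤ 1) (hlp : 0 < lp) (hlm : 0 ≤ lm)
    (hz : z ∈ closure {x ∈ Ω | 0 < u x}) {ρ L : ℝ} (hL : 0 < L) (hball : ball z ρ ⊆ Ω)
    (hgrad : ∀ r, 0 < r → r < ρ → ∀ x ∈ ball z r, ‖gradient u x‖ ≤ L * r ^ (γ / (p - γ))) :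
    ∃ c > 0, ∀ r, 0 < r → r < ρ →
      ENNReal.ofReal c * volume (ball z r) ≤ volume ({x ∈ Ω | 0 < u x} ∩ ball z r) := by
  obtain ⟨c, hc, hnondeg⟩ := hu.exists_mul_rpow_lt_of_pos hp hγ0 hγ1 hlp hlm
  set τ := γ / (p - γ)
  obtain ⟨δ, hδ0, hδ, hLδ⟩ : ∃ δ > 0, δ ≤ 1 / 2 ∧ L * δ ≤ c * (1 / 4) ^ (1 + τ) :=
    ⟨min (1 / 2) (c * (1 / 4) ^ (1 + τ) / L), by positivity, min_le_left _ _,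
      (le_div_iff₀' hL).1 (min_le_right _ _)⟩
  refine ⟨δ ^ N, by positivity, fun r hr hrρ => ?_⟩
  have hδr : δ * r ≤ r / 2 := by nlinarith
  obtain ⟨y, ⟨-, hy⟩, hzy⟩ := Metric.mem_closure_iff.1 hz (r / 4) (by positivity)
  obtain ⟨x₀, hx₀, hux₀⟩ := hnondeg y (r / 4) (by positivity) hy fun t ht =>
    hball <| mem_ball.2 <| by linarith [dist_triangle t y z, mem_closedBall.1 ht, dist_comm z y]
  have hsub : ball x₀ (δ * r) ⊆ ball z r := ball_subset_ball' <| by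
    linarith [dist_triangle x₀ y z, mem_closedBall.1 hx₀, dist_comm z y]
  have hsubΩ : ball x₀ (δ * r) ⊆ Ω := hsub.trans <| (ball_subset_ball hrρ.le).trans hball
  have hosc : ∀ x ∈ ball x₀ (δ * r), u x₀ - u x ≤ c * (r / 4) ^ (1 + τ) := fun x hx => by
    calc u x₀ - u x ≤ L * r ^ τ * (δ * r) := sub_le_of_norm_gradient_le
          (fun t ht => hu.differentiableAt (hsubΩ ht)) (fun t ht => hgrad r hr hrρ t (hsub ht)) hx
      _ = L * δ * r ^ (1 + τ) := by
          rw [Real.rpow_add hr, Real.rpow_one]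
          ring
      _ ≤ c * (1 / 4) ^ (1 + τ) * r ^ (1 + τ) := by gcongr
      _ = c * (r / 4) ^ (1 + τ) := by
          rw [mul_assoc, ← Real.mul_rpow (by norm_num) hr.le, one_div_mul_eq_div]
  calc ENNReal.ofReal (δ ^ N) * volume (ball z r) = volume (ball x₀ (δ * r)) := by
        rw [Measure.addHaar_ball_mul_of_pos volume x₀ hδ0, finrank_euclideanSpace_fin,
          Measure.addHaar_ball_center]
    _ ≤ volume ({x ∈ Ω | 0 < u x} ∩ ball z r) := measure_mono fun x hx =>
        ⟨⟨hsubΩ hx, by linarith [hosc x hx]⟩, hsub hx⟩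

end APLocMin

theorem measure_le_ofReal_one_sub_mul {α : Type*} [MeasurableSpace α] {μ : Measure α}
    {s t b : Set α} {c : ℝ} (hst : Disjoint s t) (ht : MeasurableSet t) (hsb : s ⊆ b) (htb : t ⊆ b)
    (hb : μ b ≠ ⊤) (hc : 0 ≤ c) (hct : ENNReal.ofReal c * μ b ≤ μ t) :
    μ s ≤ ENNReal.ofReal (1 - c) * μ b := by
  rw [ENNReal.ofReal_sub _ hc, ENNReal.ofReal_one, ENNReal.sub_mul fun _ _ => hb, one_mul]
  refine ENNReal.le_sub_of_add_le_right (ENNReal.mul_ne_top ENNReal.ofReal_ne_top hb) ?_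
  calc μ s + ENNReal.ofReal c * μ b ≤ μ s + μ t := by gcongr
    _ = μ (s ∪ t) := (measure_union hst ht).symm
    _ ≤ μ b := measure_mono (union_subset hsb htb)

theorem stmt17_general {N : ℕ} {p γ lp lm : ℝ} (hp : 1 < p) (hγ0 : 0 < γ) (hγ1 : γ ≤ 1)
    (hlp : 0 < lp) (hlm : 0 < lm) {Ω : Set (EuclideanSpace ℝ (Fin N))}
    {u : EuclideanSpace ℝ (Fin N) → ℝ} (hu : APLocMin N p (Fgam γ lp lm) Ω u)
    {z : EuclideanSpace ℝ (Fin N)} (hz_pos : z ∈ closure {x ∈ Ω | 0 < u x})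
    (hz_neg : z ∈ closure {x ∈ Ω | u x < 0}) {ρ L : ℝ} (hL : 0 < L) (hball : ball z ρ ⊆ Ω)
    (hgrad : ∀ r, 0 < r → r < ρ → ∀ x ∈ ball z r, ‖gradient u x‖ ≤ L * r ^ (γ / (p - γ))) :
    ∃ c : ℝ, 0 < c ∧ c ≤ 1 / 2 ∧ ∀ r, 0 < r → r < ρ →
      (ENNReal.ofReal c * volume (ball z r) ≤ volume ({x ∈ Ω | 0 < u x} ∩ ball z r) ∧
        volume ({x ∈ Ω | 0 < u x} ∩ ball z r) ≤ ENNReal.ofReal (1 - c) * volume (ball z r)) ∧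
      (ENNReal.ofReal c * volume (ball z r) ≤ volume ({x ∈ Ω | u x < 0} ∩ ball z r) ∧
        volume ({x ∈ Ω | u x < 0} ∩ ball z r) ≤ ENNReal.ofReal (1 - c) * volume (ball z r)) := by
  have hu_neg : APLocMin N p (Fgam γ lm lp) Ω fun x => -u x := by
    simpa only [Fgam_neg] using hu.neg
  obtain ⟨a, ha, hpos⟩ := hu.exists_mul_volume_ball_le_volume_pos hp hγ0 hγ1 hlp hlm.le hz_pos
    hL hball hgrad
  obtain ⟨b, hb, hneg⟩ := hu_neg.exists_mul_volume_ball_le_volume_pos hp hγ0 hγ1 hlm hlp.le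
    (by simpa only [neg_pos] using hz_neg) hL hball
    (by simpa only [gradient_fun_neg, norm_neg] using hgrad)
  simp only [neg_pos] at hneg
  obtain ⟨c, hc, hc2, hca, hcb⟩ : ∃ c > 0, c ≤ 1 / 2 ∧ c ≤ a ∧ c ≤ b :=
    ⟨min (1 / 2) (min a b), by positivity, by simp, by simp, by simp⟩
  refine ⟨c, hc, hc2, fun r hr hrρ => ?_⟩
  have hballr : ball z r ⊆ Ω := (ball_subset_ball hrρ.le).trans hball
  have hdisj : Disjoint ({x ∈ Ω | 0 < u x} ∩ ball z r) ({x ∈ Ω | u x < 0} ∩ ball z r) :=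
    disjoint_left.2 fun x hx hx' => hx.1.2.not_gt hx'.1.2
  have hpos_c := (mul_le_mul_left (ENNReal.ofReal_le_ofReal hca) _).trans (hpos r hr hrρ)
  have hneg_c := (mul_le_mul_left (ENNReal.ofReal_le_ofReal hcb) _).trans (hneg r hr hrρ)
  exact ⟨⟨hpos_c, measure_le_ofReal_one_sub_mul hdisj
      (hu.isOpen_inter_ball hballr isOpen_Iio).measurableSet inter_subset_right inter_subset_right
      measure_ball_lt_top.ne hc.le hneg_c⟩,
    ⟨hneg_c, measure_le_ofReal_one_sub_mul hdisj.symm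
      (hu.isOpen_inter_ball hballr isOpen_Ioi).measurableSet inter_subset_right inter_subset_right
      measure_ball_lt_top.ne hc.le hpos_c⟩⟩

/-- Upper and lower Lebesgue density estimates for both phases at a branching
two-phase free boundary point, assuming growth and interior Lipschitz estimates. -/
theorem stmt17 (N : ℕ) (hN : 1 ≤ N) (p γ lp lm : ℝ)
    (hp : 1 < p) (hγ0 : 0 < γ) (hγ1 : γ ≤ 1) (hγp : γ < p)
    (hlp : 0 < lp) (hlm : 0 < lm)
    (Ω : Set (EuclideanSpace ℝ (Fin N))) (hΩo : IsOpen Ω) (hΩb : Bornology.IsBounded Ω)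
    (u : EuclideanSpace ℝ (Fin N) → ℝ) (hu : APLocMin N p (Fgam γ lp lm) Ω u)
    (z : EuclideanSpace ℝ (Fin N)) (hzΩ : z ∈ Ω)
    (hz1 : z ∈ frontier {x ∈ Ω | 0 < u x}) (hz2 : z ∈ frontier {x ∈ Ω | u x < 0})
    (hz3 : gradient u z = 0)
    (ρ₀ C₂ L : ℝ) (hρ₀ : 0 < ρ₀) (hC₂ : 0 < C₂) (hL : 0 < L)
    (hball : Metric.ball z ρ₀ ⊆ Ω)
    (hgrowth : ∀ r : ℝ, 0 < r → r < ρ₀ → ∀ x ∈ Metric.ball z r,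
      |u x| ≤ C₂ * r ^ (1 + γ / (p - γ)))
    (hlip : ∀ r : ℝ, 0 < r → r < ρ₀ / 2 → ∀ y ∈ Metric.ball z r,
      ∀ x ∈ Metric.ball y (r / 2), ‖gradient u x‖ ≤ L * r ^ (γ / (p - γ))) :
    ∃ c₂ ρ₂ : ℝ, 0 < c₂ ∧ c₂ ≤ 1 / 2 ∧ 0 < ρ₂ ∧ ρ₂ < ρ₀ ∧
      ∀ r : ℝ, 0 < r → r < ρ₂ →
        (ENNReal.ofReal c₂ * volume (Metric.ball z r) ≤
            volume ({x ∈ Ω | 0 < u x} ∩ Metric.ball z r) ∧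
          volume ({x ∈ Ω | 0 < u x} ∩ Metric.ball z r) ≤
            ENNReal.ofReal (1 - c₂) * volume (Metric.ball z r)) ∧
        (ENNReal.ofReal c₂ * volume (Metric.ball z r) ≤
            volume ({x ∈ Ω | u x < 0} ∩ Metric.ball z r) ∧
          volume ({x ∈ Ω | u x < 0} ∩ Metric.ball z r) ≤
            ENNReal.ofReal (1 - c₂) * volume (Metric.ball z r)) := by
  obtain ⟨c, hc, hc2, hdensity⟩ := stmt17_general hp hγ0 hγ1 hlp hlm hu
    (frontier_subset_closure hz1) (frontier_subset_closure hz2) hL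
    ((ball_subset_ball (half_le_self hρ₀.le)).trans hball)
    fun r hr hr2 x hx => hlip r hr hr2 x hx x (mem_ball_self (half_pos hr))
  exact ⟨c, ρ₀ / 2, hc, hc2, half_pos hρ₀, half_lt_self hρ₀, hdensity⟩
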